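/- arXiv:math/9904143 — 2 statements merged into one kernel-verified Lean document; each statement's English description precedes it below -/
import Mathlib

section
/- Let K be a field. The ring Γ of number-theoretic functions is an integral domain, and it is a local ring whose unique maximal ideal consists precisely of the functions f with f(1) = 0. -/
/-!
Let `K` be a field.  The ring `Γ` of number-theoretic functions (all functions
`ℕ+ → K`, implemented in Mathlib as `ArithmeticFunction K`, i.e. functions
`ℕ → K` vanishing at `0`, with pointwise addition and the Dirichlet convolution
product) is an integral domain, and it is a local ring whose unique maximal
ideal consists precisely of the functions `f` with `f 1 = 0`.
-/

/-!
If `a` and `b` are the least indices at which `f` and `g` do not vanish, then the only surviving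
term of `(f * g) (a * b)` is `f a * g b`; this gives the absence of zero divisors.
Evaluation at `1` is a ring homomorphism that reflects units, because a Dirichlet inverse can be
computed recursively from an inverse of the value at `1`; so locality passes from the coefficients
to the arithmetic functions, and the maximal ideal is pulled back.
-/

section LeastIndex

variable {R : Type*}

theorem arithmeticFunction_mul_apply_mul_of_forall_lt [Semiring R] {f g : ArithmeticFunction R}
    {a b : ℕ} (hf : ∀ m < a, f m = 0) (hg : ∀ n < b, g n = 0) :
    (f * g) (a * b) = f a * g b := by
  rcases eq_or_ne a 0 with rfl | ha
  · simp
  rcases eq_or_ne b 0 with rfl | hb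
  · simp
  rw [ArithmeticFunction.mul_apply]
  refine Finset.sum_eq_single (a, b) (fun ⟨c, d⟩ hcd hne ↦ ?_) (by simp [ha, hb])
  have hmul : c * d = a * b := (Nat.mem_divisorsAntidiagonal.1 hcd).1
  have hlt : c < a ∨ d < b := by
    by_contra! hle
    have hpos : 0 < d := (Nat.pos_of_ne_zero hb).trans_le hle.2
    obtain ⟨rfl, rfl⟩ := (mul_eq_mul_iff_eq_and_eq_of_pos hle.1 hle.2
      (Nat.pos_of_ne_zero ha) hpos).1 hmul.symm
    exact hne rfl
  rcases hlt with hc | hd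
  · rw [hf c hc, zero_mul]
  · rw [hg d hd, mul_zero]

theorem exists_arithmeticFunction_apply_ne_zero_and_forall_lt [Zero R]
    {f : ArithmeticFunction R} (hf : f ≠ 0) :
    ∃ a, f a ≠ 0 ∧ ∀ m < a, f m = 0 := by
  classical
  have hex : ∃ n, f n ≠ 0 := DFunLike.ne_iff.1 hf
  exact ⟨Nat.find hex, Nat.find_spec hex, fun m hm ↦ not_not.1 (Nat.find_min hex hm)⟩

instance instNoZeroDivisorsArithmeticFunction [Semiring R] [NoZeroDivisors R] :
    NoZeroDivisors (ArithmeticFunction R) where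
  eq_zero_or_eq_zero_of_mul_eq_zero {f g} hfg := by
    by_contra! hne
    obtain ⟨a, hfa, hf⟩ := exists_arithmeticFunction_apply_ne_zero_and_forall_lt hne.1
    obtain ⟨b, hgb, hg⟩ := exists_arithmeticFunction_apply_ne_zero_and_forall_lt hne.2
    apply mul_ne_zero hfa hgb
    rw [← arithmeticFunction_mul_apply_mul_of_forall_lt hf hg, hfg, ArithmeticFunction.zero_apply]

end LeastIndex

/-- Evaluation at `1` as a ring homomorphism from the Dirichlet ring to its coefficients, along
which locality is transferred. -/
def arithmeticFunctionEvalOne (R : Type*) [Semiring R] : ArithmeticFunction R →+* R where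
  toFun f := f 1
  map_one' := ArithmeticFunction.one_one
  map_mul' _ _ := ArithmeticFunction.mul_apply_one
  map_zero' := ArithmeticFunction.zero_apply
  map_add' _ _ := ArithmeticFunction.add_apply

instance instIsDomainArithmeticFunction (R : Type*) [CommRing R] [IsDomain R] :
    IsDomain (ArithmeticFunction R) :=
  have : Nontrivial (ArithmeticFunction R) := (arithmeticFunctionEvalOne R).domain_nontrivial
  NoZeroDivisors.to_isDomain _

instance isLocalHom_arithmeticFunctionEvalOne (R : Type*) [CommRing R] :
    IsLocalHom (arithmeticFunctionEvalOne R) where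
  map_nonunit _ := ArithmeticFunction.isUnit_iff_isUnit_apply_one.2

instance instIsLocalRingArithmeticFunction (R : Type*) [CommRing R] [IsLocalRing R] :
    IsLocalRing (ArithmeticFunction R) :=
  (arithmeticFunctionEvalOne R).domain_isLocalRing

theorem mem_maximalIdeal_arithmeticFunction {R : Type*} [CommRing R] [IsLocalRing R]
    {f : ArithmeticFunction R} :
    f ∈ IsLocalRing.maximalIdeal (ArithmeticFunction R) ↔ f 1 ∈ IsLocalRing.maximalIdeal R :=
  not_congr ArithmeticFunction.isUnit_iff_isUnit_apply_one

theorem arithmeticFunction_isDomain_isLocalRing_maximalIdeal_general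
    (R : Type*) [CommRing R] [IsDomain R] [IsLocalRing R] :
    IsDomain (ArithmeticFunction R) ∧ IsLocalRing (ArithmeticFunction R) ∧
      ∀ I : Ideal (ArithmeticFunction R),
        I.IsMaximal ↔ (I : Set (ArithmeticFunction R)) =
          {f : ArithmeticFunction R | f 1 ∈ IsLocalRing.maximalIdeal R} := by
  refine ⟨inferInstance, inferInstance, fun I ↦ ?_⟩
  have hmax : (IsLocalRing.maximalIdeal (ArithmeticFunction R) : Set (ArithmeticFunction R)) =
      {f | f 1 ∈ IsLocalRing.maximalIdeal R} :=
    Set.ext fun _ ↦ mem_maximalIdeal_arithmeticFunction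
  rw [IsLocalRing.isMaximal_iff, ← hmax, SetLike.coe_set_eq]

theorem arithmeticFunction_isDomain_isLocalRing_maximalIdeal
    (K : Type*) [Field K] :
    IsDomain (ArithmeticFunction K) ∧ IsLocalRing (ArithmeticFunction K) ∧
      ∀ I : Ideal (ArithmeticFunction K),
        I.IsMaximal ↔ (I : Set (ArithmeticFunction K)) =
          {f : ArithmeticFunction K | f 1 = 0} := by
  simpa only [IsLocalRing.maximalIdeal_eq_bot, Ideal.mem_bot] using
    arithmeticFunction_isDomain_isLocalRing_maximalIdeal_general K
end

section
/- Let K be a field of characteristic zero. Then the ring Γ of number-theoretic functions is a unique factorization domain: every nonzero element factors into irreducible elements, uniquely up to order and unit factors. -/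
/-!
Let `K` be a field of characteristic zero.  Then the ring `Γ` of
number-theoretic functions (implemented as `ArithmeticFunction K` with the
convolution product) is a unique factorization domain: it is an integral
domain, every nonzero non-unit element factors into irreducible elements, and
such factorizations are unique up to order and unit (associate) factors.
-/

/-!
Prime factorization identifies `Γ` with the power series ring `K⟦X₀, X₁, …⟧` in countably many
variables.

In finitely many variables, a shear `X i ↦ X i + X 0 ^ c i` makes a given nonzero series regular in
`X 0`; Weierstrass preparation then replaces it by a distinguished polynomial over a power series
ring in one variable fewer, and Gauss's lemma applies.

The ring in countably many variables is the inverse limit of these unique factorization domains. If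
all the restrictions of `f` to finitely many variables were reducible, each of them would have a
nonempty finite set of classes of proper divisors, and by König's lemma one could choose such
divisors compatibly and obtain a proper factorization of `f` in the limit. So an irreducible `f`
has an irreducible restriction; all the later restrictions are then irreducible as well, hence
prime, and primality passes to the limit.
-/

theorem exists_seq_map_succ_eq_of_surjective {α : ℕ → Type*} [Nonempty (α 0)]
    {τ : ∀ n, α (n + 1) → α n} (hτ : ∀ n, Function.Surjective (τ n)) :
    ∃ f : ∀ n, α n, ∀ n, τ n (f (n + 1)) = f n := by
  choose s hs using hτ
  exact ⟨Nat.rec (Classical.arbitrary _) s, fun n => hs n _⟩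

theorem exists_seq_map_succ_eq_of_finite {α : ℕ → Type*} [∀ n, Finite (α n)]
    [∀ n, Nonempty (α n)] (τ : ∀ n, α (n + 1) → α n) :
    ∃ f : ∀ n, α n, ∀ n, τ n (f (n + 1)) = f n := by
  let proj {i j : ℕ} (hij : i ≤ j) (a : α j) : α i :=
    Nat.decreasingInduction (motive := fun m _ => α m) (fun k _ => τ k) a hij
  obtain ⟨f, hf⟩ := exists_seq_forall_proj_of_forall_finite proj
    (fun _ _ => Nat.decreasingInduction_self _ _)
    (fun _ _ _ hij hjk a => (Nat.decreasingInduction_trans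
      (motive := fun m _ => α m) hij hjk (fun k _ => τ k) a).symm)
    (fun _ _ => Set.toFinite _)
  refine ⟨f, fun n => ?_⟩
  rw [← hf n.le_succ]
  exact (Nat.decreasingInduction_succ' (motive := fun m _ => α m) (fun k _ => τ k) _).symm

section Divisibility

variable {M N : Type*} [CommMonoidWithZero M] [CommMonoidWithZero N]

theorem dvdNotUnit_map (φ : M →* N) [IsLocalHom φ] {a b : M} (hab : DvdNotUnit a b)
    (hb : φ b ≠ 0) : DvdNotUnit (φ a) (φ b) := by
  obtain ⟨-, c, hc, rfl⟩ := hab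
  rw [map_mul] at hb ⊢
  exact ⟨left_ne_zero_of_mul hb, φ c, fun h => hc (isUnit_of_map_unit φ c h), rfl⟩

theorem wfDvdMonoid_of_isLocalHom {ι : Type*} {P : ι → Type*} [∀ i, CommMonoidWithZero (P i)]
    [∀ i, WfDvdMonoid (P i)] (φ : ∀ i, M →* P i) [∀ i, IsLocalHom (φ i)]
    (hφ : ∀ a ≠ 0, ∃ i, φ i a ≠ 0) : WfDvdMonoid M := by
  have acc_of_ne_zero (a : M) (ha : a ≠ 0) : Acc DvdNotUnit a := by
    obtain ⟨i, hi⟩ := hφ a ha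
    induction hx : φ i a using (IsWellFounded.wf (r := DvdNotUnit (α := P i))).induction
      generalizing a with
    | _ x ih =>
      subst hx
      refine ⟨_, fun b hba => ?_⟩
      have hlt := dvdNotUnit_map (φ i) hba hi
      exact ih _ hlt b hba.1 hlt.1 rfl
  exact ⟨⟨fun a => ⟨_, fun b hba => acc_of_ne_zero b hba.1⟩⟩⟩

/-- The associate classes of the proper divisors of `a`, that is, of the factors in the
factorizations of `a` into two non-units. There are finitely many of them when `a ≠ 0` lies in a
unique factorization monoid, which is what a compactness argument on factorizations needs. -/
def properDivisors (a : M) : Set (Associates M) :=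
  Associates.mk '' {x | ¬ IsUnit x ∧ ∃ y, ¬ IsUnit y ∧ a = x * y}

theorem mk_mem_properDivisors_iff {a x : M} :
    Associates.mk x ∈ properDivisors a ↔ ¬ IsUnit x ∧ ∃ y, ¬ IsUnit y ∧ a = x * y := by
  refine ⟨?_, fun hx => ⟨x, hx, rfl⟩⟩
  rintro ⟨z, ⟨hz, y, hy, rfl⟩, hzx⟩
  obtain ⟨u, rfl⟩ := Associates.mk_eq_mk_iff_associated.1 hzx
  exact ⟨(Units.isUnit_mul_units z u).not.2 hz, ↑u⁻¹ * y, (Units.isUnit_units_mul u⁻¹ y).not.2 hy,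
    by rw [mul_assoc, Units.mul_inv_cancel_left]⟩

theorem finite_properDivisors [UniqueFactorizationMonoid M] {a : M} (ha : a ≠ 0) :
    (properDivisors a).Finite := by
  have : Fintype {c // c ∣ Associates.mk a} :=
    UniqueFactorizationMonoid.fintypeSubtypeDvd _ (Associates.mk_ne_zero.2 ha)
  refine (Set.finite_coe_iff.1 (Finite.of_fintype {c // c ∣ Associates.mk a})).subset ?_
  rintro _ ⟨x, ⟨-, y, -, rfl⟩, rfl⟩
  exact Associates.mk_dvd_mk.2 (dvd_mul_right x y)

theorem properDivisors_nonempty {a : M} (hu : ¬ IsUnit a) (ha : ¬ Irreducible a) :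
    (properDivisors a).Nonempty := by
  rw [irreducible_iff] at ha
  push Not at ha
  obtain ⟨x, y, hxy, hx, hy⟩ := ha hu
  exact ⟨_, x, ⟨hx, y, hy, hxy⟩, rfl⟩

/-- The map on associate classes induced by a monoid homomorphism. -/
def associatesMap (φ : M →* N) : Associates M → Associates N :=
  Quotient.map φ fun _ _ h => h.map φ

theorem mapsTo_associatesMap_properDivisors (φ : M →* N) [IsLocalHom φ] (a : M) :
    Set.MapsTo (associatesMap φ) (properDivisors a) (properDivisors (φ a)) := by
  rintro _ ⟨x, ⟨hx, y, hy, rfl⟩, rfl⟩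
  exact ⟨φ x, ⟨fun h => hx (isUnit_of_map_unit φ x h), φ y,
    fun h => hy (isUnit_of_map_unit φ y h), map_mul φ x y⟩, rfl⟩

theorem exists_mk_eq_and_map_eq {φ : M →* N} [IsLocalHom φ] (hφ : Function.Surjective φ)
    {c : Associates M} {b : N} (h : associatesMap φ c = Associates.mk b) :
    ∃ a, Associates.mk a = c ∧ φ a = b := by
  obtain ⟨a, rfl⟩ := Associates.mk_surjective c
  obtain ⟨u, hu⟩ := Associates.mk_eq_mk_iff_associated.1 h
  obtain ⟨v, hv⟩ := hφ u
  have hv_unit : IsUnit v := isUnit_of_map_unit φ v (hv ▸ u.isUnit)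
  refine ⟨a * v, Associates.mk_eq_mk_iff_associated.2 ?_, by rw [map_mul, hv, hu]⟩
  exact associated_mul_unit_left a v hv_unit

end Divisibility

/-- `A` is the inverse limit of the sequence of monoids with zero `B n` with transition maps `τ n`,
the projections being `π n`. -/
structure IsTowerLimit {A : Type*} {B : ℕ → Type*} [CommMonoidWithZero A]
    [∀ n, CommMonoidWithZero (B n)] (τ : ∀ n, B (n + 1) →* B n) (π : ∀ n, A →* B n) : Prop where
  map_succ (n : ℕ) (a : A) : τ n (π (n + 1) a) = π n a
  ext {a b : A} (h : ∀ n, π n a = π n b) : a = b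
  exists_lift (b : ∀ n, B n) (hb : ∀ n, τ n (b (n + 1)) = b n) : ∃ a, ∀ n, π n a = b n

namespace IsTowerLimit

variable {A : Type*} {B : ℕ → Type*} [CommMonoidWithZero A] [∀ n, CommMonoidWithZero (B n)]
  {τ : ∀ n, B (n + 1) →* B n} {π : ∀ n, A →* B n}

theorem antitone_map_dvd_map (h : IsTowerLimit τ π) (a b : A) :
    Antitone fun n => π n a ∣ π n b :=
  antitone_nat_of_succ_le fun n hn => by
    simpa only [h.map_succ] using map_dvd (τ n) hn

theorem eventually_irreducible_map [∀ n, IsLocalHom (τ n)] (h : IsTowerLimit τ π) {a : A} {m : ℕ}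
    (hm : Irreducible (π m a)) : ∀ᶠ n in Filter.atTop, Irreducible (π n a) := by
  refine Filter.eventually_atTop.2 ⟨m, fun n hn => ?_⟩
  induction n, hn using Nat.le_induction with
  | base => exact hm
  | succ n _ ih => exact Irreducible.of_map (f := τ n) (by rwa [h.map_succ])

theorem dvd_of_forall_map_dvd [∀ n, IsCancelMulZero (B n)] (h : IsTowerLimit τ π) {a b : A}
    (ha : ∀ n, π n a ≠ 0) (hab : ∀ n, π n a ∣ π n b) : a ∣ b := by
  choose q hq using hab
  obtain ⟨c, hc⟩ := h.exists_lift q fun n => mul_left_cancel₀ (ha n) <| by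
    rw [← hq, ← h.map_succ n a, ← map_mul, ← hq, h.map_succ]
  exact ⟨c, h.ext fun n => by rw [map_mul, hc, hq]⟩

theorem dvd_of_frequently_map_dvd [∀ n, IsCancelMulZero (B n)] (h : IsTowerLimit τ π) {a b : A}
    (ha : ∀ n, π n a ≠ 0) (hab : ∃ᶠ n in Filter.atTop, π n a ∣ π n b) : a ∣ b := by
  refine h.dvd_of_forall_map_dvd ha fun n => ?_
  obtain ⟨m, hnm, hm⟩ := Filter.frequently_atTop.1 hab n
  exact h.antitone_map_dvd_map a b hnm hm

theorem prime_of_eventually_prime_map [∀ n, IsCancelMulZero (B n)] (h : IsTowerLimit τ π) {a : A}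
    (h0 : a ≠ 0) (ha : ∀ n, π n a ≠ 0) (hp : ∀ᶠ n in Filter.atTop, Prime (π n a)) : Prime a := by
  obtain ⟨m, hm⟩ := hp.exists
  refine ⟨h0, fun hu => hm.not_isUnit (hu.map _), fun b c hbc => ?_⟩
  have hor : ∀ᶠ n in Filter.atTop, π n a ∣ π n b ∨ π n a ∣ π n c := hp.mono fun n hn =>
    hn.dvd_or_dvd (by simpa only [map_mul] using map_dvd (π n) hbc)
  exact (Filter.frequently_or_distrib.1 hor.frequently).imp
    (h.dvd_of_frequently_map_dvd ha) (h.dvd_of_frequently_map_dvd ha)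

theorem exists_forall_mk_mem_properDivisors [∀ n, UniqueFactorizationMonoid (B n)]
    [∀ n, IsLocalHom (τ n)] (h : IsTowerLimit τ π) (hτ : ∀ n, Function.Surjective (τ n)) {f : A}
    (hf : ∀ n, π n f ≠ 0) (hne : ∀ n, (properDivisors (π n f)).Nonempty) :
    ∃ g : A, ∀ n, Associates.mk (π n g) ∈ properDivisors (π n f) := by
  have (n : ℕ) : Finite (properDivisors (π n f)) := (finite_properDivisors (hf n)).to_subtype
  have (n : ℕ) : Nonempty (properDivisors (π n f)) := (hne n).to_subtype
  have mapsTo (n : ℕ) : Set.MapsTo (associatesMap (τ n)) (properDivisors (π (n + 1) f))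
      (properDivisors (π n f)) :=
    h.map_succ n f ▸ mapsTo_associatesMap_properDivisors (τ n) (π (n + 1) f)
  obtain ⟨c, hc⟩ := exists_seq_map_succ_eq_of_finite
    (α := fun n => properDivisors (π n f)) fun n => (mapsTo n).restrict _ _ _
  have hc (n : ℕ) : associatesMap (τ n) (c (n + 1)) = c n := congrArg Subtype.val (hc n)
  have : Nonempty {x : B 0 // Associates.mk x = c 0} :=
    nonempty_subtype.2 (Associates.mk_surjective _)
  let lower (n : ℕ) (y : {y : B (n + 1) // Associates.mk y = c (n + 1)}) :
      {x : B n // Associates.mk x = c n} :=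
    ⟨τ n y, (congrArg (associatesMap (τ n)) y.2).trans (hc n)⟩
  have lower_surjective (n : ℕ) : Function.Surjective (lower n) := fun x => by
    obtain ⟨y, hy, hyx⟩ := exists_mk_eq_and_map_eq (hτ n) ((hc n).trans x.2.symm)
    exact ⟨⟨y, hy⟩, Subtype.ext hyx⟩
  obtain ⟨b, hb⟩ := exists_seq_map_succ_eq_of_surjective lower_surjective
  obtain ⟨g, hg⟩ := h.exists_lift (fun n => b n) fun n => congrArg Subtype.val (hb n)
  exact ⟨g, fun n => by rw [hg, (b n).2]; exact (c n).2⟩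

theorem exists_irreducible_map [∀ n, UniqueFactorizationMonoid (B n)] [∀ n, IsLocalHom (τ n)]
    [∀ n, IsLocalHom (π n)] (h : IsTowerLimit τ π) (hτ : ∀ n, Function.Surjective (τ n)) {f : A}
    (hirr : Irreducible f) (hf : ∀ n, π n f ≠ 0) : ∃ n, Irreducible (π n f) := by
  by_contra! hred
  obtain ⟨g, hg⟩ := h.exists_forall_mk_mem_properDivisors hτ hf fun n =>
    properDivisors_nonempty (fun hu => hirr.not_isUnit (isUnit_of_map_unit _ _ hu)) (hred n)
  simp only [mk_mem_properDivisors_iff] at hg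
  choose hgu q hqu hq using hg
  have hg0 (n : ℕ) : π n g ≠ 0 := left_ne_zero_of_mul (hq n ▸ hf n)
  obtain ⟨r, rfl⟩ := h.dvd_of_forall_map_dvd hg0 fun n => ⟨q n, hq n⟩
  rcases hirr.isUnit_or_isUnit rfl with hu | hu
  · exact hgu 0 (hu.map (π 0))
  · have : π 0 r = q 0 := mul_left_cancel₀ (hg0 0) (by rw [← map_mul, hq])
    exact hqu 0 (this ▸ hu.map (π 0))

theorem prime_of_irreducible [∀ n, UniqueFactorizationMonoid (B n)] [∀ n, IsLocalHom (τ n)]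
    [∀ n, IsLocalHom (π n)] (h : IsTowerLimit τ π) (hτ : ∀ n, Function.Surjective (τ n)) {f : A}
    (hirr : Irreducible f) (hf : ∀ n, π n f ≠ 0) : Prime f := by
  obtain ⟨m, hm⟩ := h.exists_irreducible_map hτ hirr hf
  refine h.prime_of_eventually_prime_map hirr.ne_zero hf ?_
  exact (h.eventually_irreducible_map hm).mono fun n hn => hn.prime

end IsTowerLimit

section Restriction

open MvPowerSeries

variable {R : Type*} [CommRing R]

theorem constantCoeff_killCompl {σ τ : Type*} (e : σ ↪ τ) (f : MvPowerSeries τ R) :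
    constantCoeff (killCompl e f) = constantCoeff f := by
  rw [← coeff_zero_eq_constantCoeff_apply, coeff_killCompl, Finsupp.embDomain_zero,
    coeff_zero_eq_constantCoeff_apply]

instance isLocalHom_killCompl {σ τ : Type*} (e : σ ↪ τ) :
    IsLocalHom (killCompl (R := R) e : MvPowerSeries τ R →* MvPowerSeries σ R) where
  map_nonunit f hf := by
    rw [MonoidHom.coe_coe, isUnit_iff_constantCoeff, constantCoeff_killCompl] at hf
    exact isUnit_iff_constantCoeff.2 hf

variable (R) in
/-- Restriction of power series to the first `m` of countably many variables, by setting all the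
other variables to `0`. -/
noncomputable def restrictVars (m : ℕ) : MvPowerSeries ℕ R →* MvPowerSeries (Fin m) R :=
  (killCompl (R := R) (Fin.valEmbedding (n := m)) : _ →ₐ[R] _)

variable (R) in
/-- Elimination of the last of `m + 1` variables, by setting it to `0`. -/
noncomputable def killLastVar (m : ℕ) : MvPowerSeries (Fin (m + 1)) R →* MvPowerSeries (Fin m) R :=
  (killCompl (R := R) (Fin.castSuccEmb (n := m)) : _ →ₐ[R] _)

theorem restrictVars_zero (m : ℕ) : restrictVars R m 0 = 0 :=
  map_zero (killCompl Fin.valEmbedding)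

theorem killLastVar_surjective (m : ℕ) : Function.Surjective (killLastVar R m) := fun f =>
  ⟨rename Fin.castSuccEmb f, killCompl_rename_app f⟩

instance (m : ℕ) : IsLocalHom (restrictVars R m) := isLocalHom_killCompl _

instance (m : ℕ) : IsLocalHom (killLastVar R m) := isLocalHom_killCompl _

theorem coeff_restrictVars {m : ℕ} (f : MvPowerSeries ℕ R) (x : Fin m →₀ ℕ) :
    coeff x (restrictVars R m f) = coeff (x.embDomain Fin.valEmbedding) f :=
  coeff_killCompl ..

theorem coeff_killLastVar {m : ℕ} (f : MvPowerSeries (Fin (m + 1)) R) (x : Fin m →₀ ℕ) :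
    coeff x (killLastVar R m f) = coeff (x.embDomain Fin.castSuccEmb) f :=
  coeff_killCompl ..

theorem embDomain_castSuccEmb_embDomain_val {m : ℕ} (x : Fin m →₀ ℕ) :
    (x.embDomain Fin.castSuccEmb).embDomain Fin.valEmbedding = x.embDomain Fin.valEmbedding :=
  (Finsupp.embDomain_trans_apply ..).symm

theorem killLastVar_restrictVars (m : ℕ) (f : MvPowerSeries ℕ R) :
    killLastVar R m (restrictVars R (m + 1) f) = restrictVars R m f := by
  ext x
  rw [coeff_killLastVar, coeff_restrictVars, coeff_restrictVars,
    embDomain_castSuccEmb_embDomain_val]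

theorem eventually_mem_range_embDomain_val (y : ℕ →₀ ℕ) :
    ∀ᶠ m in Filter.atTop, y ∈ Set.range (Finsupp.embDomain (Fin.valEmbedding (n := m))) := by
  refine Filter.eventually_atTop.2 ⟨y.support.sup id + 1, fun m hm => ?_⟩
  rw [Finsupp.mem_range_embDomain_iff]
  exact fun i hi => ⟨⟨i, (Nat.lt_succ_of_le (Finset.le_sup (f := id) hi)).trans_le hm⟩, rfl⟩

theorem eq_of_frequently_restrictVars_eq {f g : MvPowerSeries ℕ R}
    (h : ∃ᶠ m in Filter.atTop, restrictVars R m f = restrictVars R m g) : f = g := by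
  ext y
  obtain ⟨m, hm, x, rfl⟩ := (h.and_eventually (eventually_mem_range_embDomain_val y)).exists
  rw [← coeff_restrictVars, hm, coeff_restrictVars]

theorem exists_restrictVars_eq (N : ℕ) (b : ∀ n, MvPowerSeries (Fin (N + n)) R)
    (hb : ∀ n, killLastVar R (N + n) (b (n + 1)) = b n) :
    ∃ f, ∀ n, restrictVars R (N + n) f = b n := by
  have restrictVars_rename {n k : ℕ} (hnk : n ≤ k) :
      restrictVars R (N + n) (rename Fin.valEmbedding (b k)) = b n := by
    induction hnk using Nat.decreasingInduction with
    | self => exact killCompl_rename_app _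
    | of_succ n _ ih =>
      rw [← hb n, ← ih]
      exact (killLastVar_restrictVars (N + n) _).symm
  have exists_embDomain_eq (y : ℕ →₀ ℕ) :
      ∃ (n : ℕ) (x : Fin (N + n) →₀ ℕ), x.embDomain Fin.valEmbedding = y := by
    obtain ⟨m, hm⟩ := Filter.eventually_atTop.1 (eventually_mem_range_embDomain_val y)
    exact ⟨m, hm _ (Nat.le_add_left m N)⟩
  choose n x hx using exists_embDomain_eq
  refine ⟨fun y => coeff (x y) (b (n y)), fun m => MvPowerSeries.ext fun z => ?_⟩
  set y := z.embDomain Fin.valEmbedding with hy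
  calc coeff z (restrictVars R (N + m) fun y => coeff (x y) (b (n y)))
      = coeff (x y) (b (n y)) := coeff_restrictVars _ z
    _ = coeff y (rename Fin.valEmbedding (b (max m (n y)))) := by
      rw [← restrictVars_rename (le_max_right m (n y)), coeff_restrictVars, hx]
    _ = coeff z (b m) := by
      rw [hy, ← coeff_restrictVars, restrictVars_rename (le_max_left m _)]

theorem isTowerLimit_restrictVars (N : ℕ) :
    IsTowerLimit (B := fun n => MvPowerSeries (Fin (N + n)) R) (fun n => killLastVar R (N + n))
      (fun n => restrictVars R (N + n)) where
  map_succ n f := killLastVar_restrictVars (N + n) f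
  ext h := eq_of_frequently_restrictVars_eq <| Filter.frequently_atTop.2 fun m =>
    ⟨N + m, Nat.le_add_left m N, h m⟩
  exists_lift := exists_restrictVars_eq N

theorem uniqueFactorizationMonoid_mvPowerSeries_nat [NoZeroDivisors R]
    [∀ m, UniqueFactorizationMonoid (MvPowerSeries (Fin m) R)] :
    UniqueFactorizationMonoid (MvPowerSeries ℕ R) := by
  have exists_restrictVars_ne_zero (f : MvPowerSeries ℕ R) (hf : f ≠ 0) :
      ∃ m, restrictVars R m f ≠ 0 := by
    by_contra! h
    exact hf (eq_of_frequently_restrictVars_eq (.of_forall fun m => by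
      rw [h, restrictVars_zero]))
  have : WfDvdMonoid (MvPowerSeries ℕ R) :=
    wfDvdMonoid_of_isLocalHom (restrictVars R) exists_restrictVars_ne_zero
  have prime_of_irreducible (f : MvPowerSeries ℕ R) (hirr : Irreducible f) : Prime f := by
    obtain ⟨N, hN⟩ := exists_restrictVars_ne_zero f hirr.ne_zero
    have h := isTowerLimit_restrictVars (R := R) N
    refine h.prime_of_irreducible (fun n => killLastVar_surjective (N + n)) hirr fun n hn => hN ?_
    have h0 := h.antitone_map_dvd_map 0 f n.zero_le
    simp only [restrictVars_zero, zero_dvd_iff] at h0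
    exact h0 hn
  exact { irreducible_iff_prime := ⟨prime_of_irreducible _, Prime.irreducible⟩ }

end Restriction

section Weierstrass

open Polynomial PowerSeries

variable {A : Type*} [CommRing A]

theorem natDegree_eq_zero_of_dvd_isDistinguishedAt {I : Ideal A} (hI : I ≠ ⊤) {w g : A[X]}
    (hw : w.IsDistinguishedAt I) (hg : g.Monic) (hgw : g ∣ w) (hu : IsUnit (g : A⟦X⟧)) :
    g.natDegree = 0 := by
  have : Nontrivial (A ⧸ I) := Ideal.Quotient.nontrivial_iff.2 hI
  let φ := Ideal.Quotient.mk I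
  have hc : IsUnit ((g.map φ).coeff 0) := by
    rw [Polynomial.coeff_map]
    simpa using (PowerSeries.isUnit_iff_constantCoeff.1 hu).map φ
  have hcoprime : IsCoprime (g.map φ) Polynomial.X := by
    rw [← X_mul_divX_add (g.map φ)]
    refine IsCoprime.mul_add_left_left ?_ _
    simpa using (isCoprime_mul_unit_left_left (hc.map Polynomial.C) 1 Polynomial.X).2
      isCoprime_one_left
  have hdvd : g.map φ ∣ Polynomial.X ^ w.natDegree := hw.map_eq_X_pow ▸ Polynomial.map_dvd φ hgw
  have hone : g.map φ = 1 :=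
    (hg.map φ).eq_one_of_isUnit (hcoprime.pow_right.isUnit_of_dvd hdvd)
  rw [← hg.natDegree_map φ, hone, natDegree_one]

theorem irreducible_of_irreducible_coe_of_isDistinguishedAt [NoZeroDivisors A] {I : Ideal A}
    (hI : I ≠ ⊤) {w : A[X]} (hw : w.IsDistinguishedAt I) (hirr : Irreducible (w : A⟦X⟧)) :
    Irreducible w := by
  refine hw.monic.irreducible_iff_natDegree.2 ⟨?_, fun g h hg hh hgh => ?_⟩
  · rintro rfl
    exact hirr.not_isUnit (by simp)
  · have hcoe : (w : A⟦X⟧) = g * h := by rw [← hgh, Polynomial.coe_mul]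
    exact (hirr.isUnit_or_isUnit hcoe).imp
      (natDegree_eq_zero_of_dvd_isDistinguishedAt hI hw hg (hgh ▸ dvd_mul_right g h))
      (natDegree_eq_zero_of_dvd_isDistinguishedAt hI hw hh (hgh ▸ dvd_mul_left h g))

theorem prime_of_irreducible_of_map_residue_ne_zero [IsDomain A] [UniqueFactorizationMonoid A]
    [IsLocalRing A] [IsAdicComplete (IsLocalRing.maximalIdeal A) A] {f : A⟦X⟧}
    (hf : Irreducible f) (h0 : f.map (IsLocalRing.residue A) ≠ 0) : Prime f := by
  obtain ⟨w, u, H⟩ := f.exists_isWeierstrassFactorization h0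
  have hwf : Associated (w : A⟦X⟧) f := ⟨H.isUnit.unit, H.eq_mul.symm⟩
  have hw : Prime w := (irreducible_of_irreducible_coe_of_isDistinguishedAt
    (IsLocalRing.maximalIdeal.isMaximal A).ne_top H.isDistinguishedAt
    (hwf.irreducible_iff.2 hf)).prime
  have : (Ideal.span {w}).IsPrime := (Ideal.span_singleton_prime hw.ne_zero).2 hw
  have : IsDomain (A⟦X⟧ ⧸ Ideal.span {f}) := H.algEquivQuotient.symm.toMulEquiv.isDomain _
  exact (Ideal.span_singleton_prime hf.ne_zero).1 ((Ideal.Quotient.isDomain_iff_prime _).1 this)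

end Weierstrass

theorem exists_weights_unique_minimizer {n : ℕ} {S : Set (Fin n → ℕ)} (hS : S.Nonempty) :
    ∃ d₀ ∈ S, ∃ c : Fin n → ℕ, (∀ i, 0 < c i) ∧ (∀ i, i.val = 0 → c i = 1) ∧
      ∀ d ∈ S, d ≠ d₀ → ∑ i, d₀ i * c i < ∑ i, d i * c i := by
  induction n with
  | zero =>
    obtain ⟨d, hd⟩ := hS
    exact ⟨d, hd, 1, fun i => i.elim0, fun i => i.elim0,
      fun e _ he => (he (Subsingleton.elim _ _)).elim⟩
  | succ n ih =>
    -- Minimize the last coordinate first: one more unit of it then has to outweigh all the other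
    -- coordinates of the minimizer `d₀` found among them.
    obtain ⟨d₁, hd₁, hmin⟩ := exists_minimalFor_of_wellFoundedLT (· ∈ S) (· (Fin.last n)) hS
    set e := d₁ (Fin.last n) with he
    obtain ⟨d₀, hd₀, c, hc_pos, hc_zero, hlt⟩ :=
      ih (S := {d | (Fin.snoc d e : Fin (n + 1) → ℕ) ∈ S})
        ⟨Fin.init d₁, by simpa [he] using hd₁⟩
    have hle (d : Fin (n + 1) → ℕ) (hd : d ∈ S) : e ≤ d (Fin.last n) :=
      (le_total e _).elim id (hmin hd)
    refine ⟨Fin.snoc d₀ e, hd₀, Fin.snoc c (1 + ∑ i, d₀ i * c i), fun i => ?_, fun i hi => ?_,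
      fun d hd hne => ?_⟩
    · cases i using Fin.lastCases with
      | last => simp
      | cast j => simpa using hc_pos j
    · cases i using Fin.lastCases with
      | last =>
        obtain rfl : n = 0 := hi
        rw [Fin.snoc_last, Fin.sum_univ_zero, add_zero]
      | cast j => simpa using hc_zero j hi
    · simp only [Fin.sum_univ_castSucc, Fin.snoc_castSucc, Fin.snoc_last]
      rcases (hle d hd).eq_or_lt with heq | hgt
      · have hsnoc : Fin.snoc (Fin.init d) e = d := by rw [heq, Fin.snoc_init_self]
        rw [heq]
        refine Nat.add_lt_add_right (hlt (Fin.init d) (by simpa [hsnoc] using hd) ?_) _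
        rintro rfl
        exact hne hsnoc.symm
      · have := Nat.mul_le_mul_right (1 + ∑ i, d₀ i * c i) hgt
        rw [Nat.succ_mul] at this
        lia

section Shear

open MvPowerSeries

variable {R : Type*} [CommRing R] {n : ℕ}

/-- The images of the variables under the substitution `X 0 ↦ X 0`, `X i ↦ X i + t * X 0 ^ c i` for
`i ≠ 0`. -/
noncomputable def shearVars (t : R) (c : Fin (n + 1) → ℕ) (i : Fin (n + 1)) :
    MvPowerSeries (Fin (n + 1)) R :=
  if i = 0 then X 0 else X i + C t * X 0 ^ c i

theorem hasSubst_shearVars (t : R) {c : Fin (n + 1) → ℕ} (hc : ∀ i, 0 < c i) :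
    HasSubst (shearVars t c) := by
  refine hasSubst_of_constantCoeff_zero fun i => ?_
  rw [shearVars]
  split_ifs
  · simp
  · simp [(hc i).ne']

theorem subst_shearVars_neg_subst_shearVars (t : R) {c : Fin (n + 1) → ℕ} (hc : ∀ i, 0 < c i)
    (f : MvPowerSeries (Fin (n + 1)) R) :
    subst (shearVars (-t) c) (subst (shearVars t c) f) = f := by
  have hs := hasSubst_shearVars (-t) hc
  have hX (i : Fin (n + 1)) : subst (shearVars (-t) c) (shearVars t c i) = X i := by
    by_cases hi : i = 0
    · simp [hi, shearVars, subst_X hs]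
    · rw [shearVars, if_neg hi, subst_add hs, subst_mul hs, subst_pow hs, subst_X hs, subst_X hs,
        subst_C]
      simp [shearVars, hi]
  rw [subst_comp_subst_apply (hasSubst_shearVars t hc) hs, funext hX, subst_self, id]

/-- The automorphism `X 0 ↦ X 0`, `X i ↦ X i + X 0 ^ c i` for `i ≠ 0`, of a power series ring. -/
noncomputable def shearEquiv (c : Fin (n + 1) → ℕ) (hc : ∀ i, 0 < c i) :
    MvPowerSeries (Fin (n + 1)) R ≃ₐ[R] MvPowerSeries (Fin (n + 1)) R :=
  AlgEquiv.ofAlgHom (substAlgHom (hasSubst_shearVars 1 hc))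
    (substAlgHom (hasSubst_shearVars (-1) hc))
    (AlgHom.ext fun f => by
      simpa [substAlgHom_apply] using subst_shearVars_neg_subst_shearVars (-1) hc f)
    (AlgHom.ext fun f => by
      simpa [substAlgHom_apply] using subst_shearVars_neg_subst_shearVars 1 hc f)

theorem shearEquiv_apply {c : Fin (n + 1) → ℕ} (hc : ∀ i, 0 < c i)
    (f : MvPowerSeries (Fin (n + 1)) R) : shearEquiv c hc f = subst (shearVars 1 c) f :=
  substAlgHom_apply (hasSubst_shearVars 1 hc) f

/-- Restriction of a power series to the axis of the variable `X 0`. -/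
noncomputable def axisRestriction : MvPowerSeries (Fin (n + 1)) R →+* PowerSeries R :=
  (PowerSeries.map constantCoeff).comp (finSuccEquiv R n).toRingHom

theorem coeff_axisRestriction (f : MvPowerSeries (Fin (n + 1)) R) (k : ℕ) :
    PowerSeries.coeff k (axisRestriction f) = coeff (Finsupp.cons k 0) f := by
  simp only [axisRestriction, RingHom.comp_apply, PowerSeries.coeff_map,
    ← coeff_zero_eq_constantCoeff_apply]
  exact coeff_coeff_finSuccEquiv ..

theorem axisRestriction_shearVars (c : Fin (n + 1) → ℕ) (h0 : c 0 = 1) (i : Fin (n + 1)) :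
    axisRestriction (shearVars (1 : R) c i) = PowerSeries.X ^ c i := by
  cases i using Fin.cases with
  | zero => simp [axisRestriction, shearVars, h0]
  | succ j => simp [axisRestriction, shearVars]

theorem coeff_axisRestriction_shearEquiv {c : Fin (n + 1) → ℕ} (hc : ∀ i, 0 < c i) (h0 : c 0 = 1)
    (f : MvPowerSeries (Fin (n + 1)) R) (k : ℕ) :
    PowerSeries.coeff k (axisRestriction (shearEquiv c hc f)) =
      ∑ᶠ d : Fin (n + 1) →₀ ℕ, if k = ∑ i, d i * c i then coeff d f else 0 := by
  have hmonomial (d : Fin (n + 1) →₀ ℕ) :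
      axisRestriction (d.prod fun i m => shearVars (1 : R) c i ^ m) =
        PowerSeries.X ^ ∑ i, d i * c i := by
    simp only [map_finsuppProd, map_pow, axisRestriction_shearVars c h0, ← pow_mul]
    rw [Finsupp.prod_fintype _ _ (by simp), Finset.prod_pow_eq_pow_sum]
    simp only [mul_comm]
  rw [coeff_axisRestriction, shearEquiv_apply, coeff_subst (hasSubst_shearVars 1 hc)]
  refine finsum_congr fun d => ?_
  rw [← coeff_axisRestriction, hmonomial, PowerSeries.coeff_X_pow, smul_eq_mul, mul_ite, mul_one,
    mul_zero]

theorem exists_algEquiv_axisRestriction_ne_zero {f : MvPowerSeries (Fin (n + 1)) R} (hf : f ≠ 0) :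
    ∃ e : MvPowerSeries (Fin (n + 1)) R ≃ₐ[R] MvPowerSeries (Fin (n + 1)) R,
      axisRestriction (e f) ≠ 0 := by
  obtain ⟨d₁, hd₁⟩ := MvPowerSeries.ne_zero_iff_exists_coeff_ne_zero f |>.1 hf
  obtain ⟨d₀, ⟨d₀, hd₀, rfl⟩, c, hc_pos, hc_zero, hlt⟩ :=
    exists_weights_unique_minimizer (S := (⇑) '' {d | coeff d f ≠ 0}) ⟨d₁, d₁, hd₁, rfl⟩
  refine ⟨shearEquiv c hc_pos, fun h => hd₀ ?_⟩
  have h := congrArg (PowerSeries.coeff (∑ i, d₀ i * c i)) h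
  rw [coeff_axisRestriction_shearEquiv hc_pos (hc_zero 0 rfl), finsum_eq_single _ d₀, if_pos rfl,
    map_zero] at h
  · exact h
  · intro d hd
    by_contra hne
    rw [ite_eq_right_iff, Classical.not_imp] at hne
    exact (hlt d ⟨d, hne.2, rfl⟩ (DFunLike.coe_injective.ne hd)).ne hne.1

end Shear

section FiniteVars

open MvPowerSeries

theorem constantCoeff_constantCoeff_finSuccEquiv {R : Type*} [CommSemiring R] {n : ℕ}
    (f : MvPowerSeries (Fin (n + 1)) R) :
    constantCoeff (PowerSeries.constantCoeff (finSuccEquiv R n f)) = constantCoeff f := by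
  rw [← coeff_zero_eq_constantCoeff_apply, ← PowerSeries.coeff_zero_eq_constantCoeff_apply,
    coeff_coeff_finSuccEquiv, Finsupp.cons_zero_zero, coeff_zero_eq_constantCoeff_apply]

theorem constantCoeff_surjective (σ R : Type*) [Semiring R] :
    Function.Surjective (constantCoeff : MvPowerSeries σ R →+* R) :=
  fun r => ⟨C r, constantCoeff_C r⟩

theorem mem_span_range_X_of_constantCoeff_eq_zero {R : Type*} [CommRing R] {n : ℕ}
    {f : MvPowerSeries (Fin n) R} (hf : constantCoeff f = 0) :
    f ∈ Ideal.span (Set.range (X : Fin n → MvPowerSeries (Fin n) R)) := by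
  induction n with
  | zero =>
    have : f = 0 := (isEmptyEquiv (Fin 0) R).injective (by simpa using hf)
    exact this ▸ Ideal.zero_mem _
  | succ n ih =>
    let E := finSuccEquiv R n
    let φ : MvPowerSeries (Fin n) R →+* MvPowerSeries (Fin (n + 1)) R :=
      (E.symm : _ →+* _).comp PowerSeries.C
    let g := PowerSeries.constantCoeff (E f)
    have hφX (j : Fin n) : φ (X j) = X j.succ :=
      E.symm_apply_eq.2 (finSuccEquiv_X_succ j).symm
    obtain ⟨q, hq⟩ : PowerSeries.X ∣ E f - PowerSeries.C g := by
      rw [PowerSeries.X_dvd_iff, map_sub, PowerSeries.constantCoeff_C, sub_self]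
    have hsplit : f = X 0 * E.symm q + φ g := by
      have hEφ : E (φ g) = PowerSeries.C g := E.apply_symm_apply _
      apply E.injective
      rw [map_add, map_mul, finSuccEquiv_X_zero, E.apply_symm_apply, hEφ, ← hq, sub_add_cancel]
    have hg : constantCoeff g = 0 := (constantCoeff_constantCoeff_finSuccEquiv f).trans hf
    have hφg : φ g ∈ Ideal.span (Set.range X) := by
      refine Ideal.span_mono ?_ (Ideal.map_span φ _ ▸ Ideal.mem_map_of_mem φ (ih hg))
      rintro _ ⟨_, ⟨j, rfl⟩, rfl⟩
      exact ⟨j.succ, (hφX j).symm⟩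
    rw [hsplit]
    exact Ideal.add_mem _ (Ideal.mul_mem_right _ _ (Ideal.subset_span ⟨0, rfl⟩)) hφg

theorem ker_constantCoeff_eq_span_range_X {R : Type*} [CommRing R] (n : ℕ) :
    RingHom.ker (constantCoeff : MvPowerSeries (Fin n) R →+* R) = Ideal.span (Set.range X) := by
  refine le_antisymm (fun f => mem_span_range_X_of_constantCoeff_eq_zero) ?_
  rw [Ideal.span_le]
  rintro _ ⟨i, rfl⟩
  simp

variable (K : Type*) [Field K] (n : ℕ)

theorem maximalIdeal_mvPowerSeries :
    IsLocalRing.maximalIdeal (MvPowerSeries (Fin n) K) = Ideal.span (Set.range X) := by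
  rw [← ker_constantCoeff_eq_span_range_X]
  exact (IsLocalRing.ker_eq_maximalIdeal _ (constantCoeff_surjective _ _)).symm

instance isAdicComplete_maximalIdeal_mvPowerSeries :
    IsAdicComplete (IsLocalRing.maximalIdeal (MvPowerSeries (Fin n) K))
      (MvPowerSeries (Fin n) K) := by
  rw [maximalIdeal_mvPowerSeries]
  infer_instance

variable {K n}

theorem prime_of_irreducible_mvPowerSeries_fin_succ
    [UniqueFactorizationMonoid (MvPowerSeries (Fin n) K)] {f : MvPowerSeries (Fin (n + 1)) K}
    (hf : Irreducible f) : Prime f := by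
  have : IsDomain (MvPowerSeries (Fin n) K) := NoZeroDivisors.to_isDomain _
  obtain ⟨e, he⟩ := exists_algEquiv_axisRestriction_ne_zero hf.ne_zero
  let E := e.trans (finSuccEquiv K n)
  rw [← MulEquiv.prime_iff E]
  refine prime_of_irreducible_of_map_residue_ne_zero ((MulEquiv.irreducible_iff E).2 hf)
    fun hzero => he ?_
  ext k
  rw [map_zero]
  have hk := congrArg (PowerSeries.coeff k) hzero
  rw [PowerSeries.coeff_map, map_zero, IsLocalRing.residue_eq_zero_iff,
    ← IsLocalRing.ker_eq_maximalIdeal constantCoeff (constantCoeff_surjective _ _)] at hk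
  exact hk

variable (K n)

theorem uniqueFactorizationMonoid_mvPowerSeries_fin :
    UniqueFactorizationMonoid (MvPowerSeries (Fin n) K) := by
  induction n with
  | zero => exact (isEmptyEquiv (Fin 0) K).symm.toMulEquiv.uniqueFactorizationMonoid inferInstance
  | succ n ih =>
    have : IsDomain (MvPowerSeries (Fin (n + 1)) K) := NoZeroDivisors.to_isDomain _
    exact { (inferInstance : WfDvdMonoid (MvPowerSeries (Fin (n + 1)) K)) with
      irreducible_iff_prime :=
        ⟨prime_of_irreducible_mvPowerSeries_fin_succ, Prime.irreducible⟩ }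

end FiniteVars

section ArithmeticFunction

open Finset

/-- An additive-to-multiplicative bijection between exponent vectors and positive integers, given
by prime factorization along an arbitrary enumeration of the primes. -/
noncomputable def exponentEquiv : (ℕ →₀ ℕ) ≃ ℕ+ :=
  let primes : ℕ ≃ Nat.Primes := nonempty_equiv_of_countable.some
  ((Finsupp.domCongr primes).trans Multiset.toFinsupp.symm).toEquiv.trans
    PNat.factorMultisetEquiv.symm

theorem exponentEquiv_add (a b : ℕ →₀ ℕ) :
    exponentEquiv (a + b) = exponentEquiv a * exponentEquiv b := by
  refine (congrArg PrimeMultiset.prod ?_).trans (PrimeMultiset.prod_add _ _)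
  exact map_add ((Finsupp.domCongr _).trans Multiset.toFinsupp.symm) a b

theorem mul_eq_exponentEquiv_iff {a : ℕ →₀ ℕ} {m n : ℕ} :
    m * n = exponentEquiv a ↔
      ∃ b c, b + c = a ∧ (exponentEquiv b : ℕ) = m ∧ (exponentEquiv c : ℕ) = n := by
  constructor
  · intro h
    have hmn : m * n ≠ 0 := h ▸ (exponentEquiv a).ne_zero
    lift m to ℕ+ using Nat.pos_of_ne_zero (left_ne_zero_of_mul hmn)
    lift n to ℕ+ using Nat.pos_of_ne_zero (right_ne_zero_of_mul hmn)
    refine ⟨exponentEquiv.symm m, exponentEquiv.symm n, exponentEquiv.injective ?_, by simp,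
      by simp⟩
    rw [exponentEquiv_add, Equiv.apply_symm_apply, Equiv.apply_symm_apply]
    exact_mod_cast h
  · rintro ⟨b, c, rfl, rfl, rfl⟩
    rw [exponentEquiv_add, PNat.mul_coe]

theorem sum_divisorsAntidiagonal_exponentEquiv {M : Type*} [AddCommMonoid M] (F : ℕ → ℕ → M)
    (a : ℕ →₀ ℕ) :
    ∑ p ∈ (exponentEquiv a : ℕ).divisorsAntidiagonal, F p.1 p.2 =
      ∑ p ∈ antidiagonal a, F (exponentEquiv p.1) (exponentEquiv p.2) := by
  let v : (ℕ →₀ ℕ) ↪ ℕ := exponentEquiv.toEmbedding.trans ⟨(↑), PNat.coe_injective⟩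
  have hmap : (exponentEquiv a : ℕ).divisorsAntidiagonal = (antidiagonal a).map (v.prodMap v) := by
    ext ⟨m, n⟩
    simp [v, mul_eq_exponentEquiv_iff]
  rw [hmap, sum_map]
  rfl

variable {R : Type*} [Semiring R]

/-- The power series attached to a number-theoretic function: the `i`-th prime is turned into the
variable `X i`. -/
noncomputable def powerSeriesOfArithmetic (f : ArithmeticFunction R) : MvPowerSeries ℕ R :=
  fun a => f (exponentEquiv a)

theorem coeff_powerSeriesOfArithmetic (f : ArithmeticFunction R) (a : ℕ →₀ ℕ) :
    MvPowerSeries.coeff a (powerSeriesOfArithmetic f) = f (exponentEquiv a) :=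
  rfl

/-- The inverse of `powerSeriesOfArithmetic`. -/
noncomputable def arithmeticOfPowerSeries (g : MvPowerSeries ℕ R) : ArithmeticFunction R :=
  ⟨fun n => if n = 0 then 0 else MvPowerSeries.coeff (exponentEquiv.symm n.toPNat') g, by simp⟩

theorem arithmeticOfPowerSeries_apply_pnat (g : MvPowerSeries ℕ R) (n : ℕ+) :
    arithmeticOfPowerSeries g n = MvPowerSeries.coeff (exponentEquiv.symm n) g := by
  rw [arithmeticOfPowerSeries, ArithmeticFunction.coe_mk, if_neg n.ne_zero, PNat.coe_toPNat']

variable (R) in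
/-- The isomorphism between number-theoretic functions under convolution and power series in
countably many variables. -/
noncomputable def arithmeticFunctionEquiv : ArithmeticFunction R ≃+* MvPowerSeries ℕ R where
  toFun := powerSeriesOfArithmetic
  invFun := arithmeticOfPowerSeries
  left_inv f := by
    ext n
    rcases n.eq_zero_or_pos with rfl | hn
    · simp
    · lift n to ℕ+ using hn
      rw [arithmeticOfPowerSeries_apply_pnat, coeff_powerSeriesOfArithmetic,
        Equiv.apply_symm_apply]
  right_inv g := by
    ext a
    rw [coeff_powerSeriesOfArithmetic, arithmeticOfPowerSeries_apply_pnat, Equiv.symm_apply_apply]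
  map_add' f g := rfl
  map_mul' f g := by
    ext a
    rw [MvPowerSeries.coeff_mul, coeff_powerSeriesOfArithmetic, ArithmeticFunction.mul_apply,
      sum_divisorsAntidiagonal_exponentEquiv (fun m n => f m * g n)]
    rfl

end ArithmeticFunction

theorem arithmeticFunction_uniqueFactorizationDomain_general
    (K : Type*) [Field K] :
    IsDomain (ArithmeticFunction K) ∧
    (∀ f : ArithmeticFunction K, f ≠ 0 → ¬IsUnit f →
      ∃ s : Multiset (ArithmeticFunction K),
        (∀ g ∈ s, Irreducible g) ∧ s.prod = f) ∧
    (∀ s t : Multiset (ArithmeticFunction K),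
      (∀ g ∈ s, Irreducible g) → (∀ g ∈ t, Irreducible g) →
      Associated s.prod t.prod → Multiset.Rel Associated s t) := by
  let e := (arithmeticFunctionEquiv K).toMulEquiv
  have := uniqueFactorizationMonoid_mvPowerSeries_fin K
  have : IsDomain (MvPowerSeries ℕ K) := NoZeroDivisors.to_isDomain _
  have hdomain : IsDomain (ArithmeticFunction K) := e.isDomain _
  have hufm : UniqueFactorizationMonoid (ArithmeticFunction K) :=
    e.symm.uniqueFactorizationMonoid uniqueFactorizationMonoid_mvPowerSeries_nat
  refine ⟨hdomain, fun f hf hu => ?_, fun s t => UniqueFactorizationMonoid.factors_unique⟩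
  obtain ⟨s, hs, hsf, -⟩ := (WfDvdMonoid.not_isUnit_iff_exists_factors_eq f hf).1 hu
  exact ⟨s, hs, hsf⟩

theorem arithmeticFunction_uniqueFactorizationDomain
    (K : Type*) [Field K] [CharZero K] :
    IsDomain (ArithmeticFunction K) ∧
    (∀ f : ArithmeticFunction K, f ≠ 0 → ¬IsUnit f →
      ∃ s : Multiset (ArithmeticFunction K),
        (∀ g ∈ s, Irreducible g) ∧ s.prod = f) ∧
    (∀ s t : Multiset (ArithmeticFunction K),
      (∀ g ∈ s, Irreducible g) → (∀ g ∈ t, Irreducible g) →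
      Associated s.prod t.prod → Multiset.Rel Associated s t) :=
  arithmeticFunction_uniqueFactorizationDomain_general K
end
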